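/- Let X be an m×n complex matrix and let l = min(m, n). Then the supremum of |Tr((Lᴴ R)ᴴ X)| over all l×m complex matrices L with ‖L‖_c ≤ 1 and all l×n complex matrices R with ‖R‖_c ≤ 1 equals the infimum of ‖η‖₂ · ‖C‖_∞ · ‖ξ‖₂ over all factorizations X = Δ_m(η)ᴴ C Δ_n(ξ) with η ∈ ℂᵐ, ξ ∈ ℂⁿ, and C an m×n complex matrix; moreover both the supremum and the infimum are attained. -/

import Mathlib

open Matrix BigOperators

/-- The ℓ²→ℓ² operator norm of a complex matrix. -/
noncomputable def opNorm {m n : ℕ} (A : Matrix (Fin m) (Fin n) ℂ) : ℝ :=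
  ‖(Matrix.toEuclideanLin A).toContinuousLinearMap‖

/-- The Euclidean norm of a complex vector. -/
noncomputable def eNorm {n : ℕ} (ξ : Fin n → ℂ) : ℝ :=
  Real.sqrt (∑ j, ‖ξ j‖ ^ 2)

/-- The column norm: the maximum Euclidean norm of a column. -/
noncomputable def colNorm {l m : ℕ} (L : Matrix (Fin l) (Fin m) ℂ) : ℝ :=
  ⨆ j : Fin m, Real.sqrt (∑ i, ‖L i j‖ ^ 2)

/-!
The trace pairing `Tr((Lᴴ R)ᴴ X) = ∑ X i j ⟪r j, l i⟫` depends only on the inner products of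
the columns `l i`, `r j` of `L` and `R`. For `X = Δ(η)ᴴ C Δ(ξ)` the Cauchy–Schwarz inequality
bounds it by `‖η‖₂ ‖C‖_∞ ‖ξ‖₂`.

Conversely let `K` be the maximum. Projecting onto the span of the smaller of the two families of
columns shows that `K` also bounds the pairing of families in the unit ball of any Hilbert space.
By the arithmetic-geometric mean inequality, for all families `x`, `y` some pair `(i, j)` then
satisfies `re ∑ X i j ⟪y j, x i⟫ ≤ K / 2 * (‖x i‖ ^ 2 + ‖y j‖ ^ 2)`. A convex combination of slack
vectors of this inequality for scalar families is the slack vector of a pair of families of vectors,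
so separating their convex hull from the negative orthant gives probability weights `p`, `q` with
`re ∑ X i j u i conj (v j) ≤ K / 2 * (∑ p i |u i| ^ 2 + ∑ q j |v j| ^ 2)`. Optimising over scalings
of `u` makes the right-hand side `K ‖u‖_p ‖v‖_q`, and `η = √p`, `ξ = √q` is the factorization
sought.
-/

section DiagonalFactorization

open RCLike Module
open scoped InnerProductSpace Matrix.Norms.L2Operator

theorem iSup_eq_iInf_and_exists_eq {α β γ : Type*} [ConditionallyCompleteLattice γ] {f : α → γ}
    {g : β → γ} {K : γ} (hf : IsGreatest (Set.range f) K) (hg : IsLeast (Set.range g) K) :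
    (⨆ a, f a) = (⨅ b, g b) ∧ (∃ a, f a = ⨆ a', f a') ∧ ∃ b, g b = ⨅ b', g b' := by
  have hsup : ⨆ a, f a = K := hf.csSup_eq
  have hinf : ⨅ b, g b = K := hg.csInf_eq
  rw [hsup, hinf]
  exact ⟨rfl, hf.1, hg.1⟩

theorem le_mul_sqrt_mul_sqrt_of_forall_mul_le {K P Q z : ℝ} (hK : 0 ≤ K) (hP : 0 ≤ P)
    (hQ : 0 ≤ Q) (h : ∀ t, t * z ≤ K / 2 * (t ^ 2 * P + Q)) : z ≤ K * (√P * √Q) := by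
  have hdiscrim : discrim (K / 2 * P) (-z) (K / 2 * Q) ≤ 0 :=
    discrim_le_zero fun t ↦ by linarith [h t]
  refine (abs_le_of_sq_le_sq' ?_ (by positivity)).2
  rw [mul_pow, mul_pow, Real.sq_sqrt hP, Real.sq_sqrt hQ]
  rw [discrim] at hdiscrim
  linarith

section Separation

theorem strongDual_apply_single_nonneg {α : Type*} [DecidableEq α] {f : StrongDual ℝ (α → ℝ)}
    {u : ℝ} (hf : ∀ v ≤ 0, f v ≤ u) (a : α) : 0 ≤ f (Pi.single a 1) := by
  by_contra! ha
  have hu : 0 ≤ u := by simpa using hf 0 le_rfl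
  have hle : ((u + 1) / f (Pi.single a 1)) • (Pi.single a 1 : α → ℝ) ≤ 0 :=
    smul_nonpos_of_nonpos_of_nonneg (div_nonpos_of_nonneg_of_nonpos (by linarith) ha.le)
      (Pi.single_nonneg.2 zero_le_one)
  have := hf _ hle
  rw [map_smul, smul_eq_mul, div_mul_cancel₀ _ ha.ne] at this
  linarith

theorem exists_mem_stdSimplex_forall_sum_nonneg {α : Type*} [Fintype α] {A : Set (α → ℝ)}
    (hA : Convex ℝ A) (hne : A.Nonempty) (hnonneg : ∀ v ∈ A, ∃ a, 0 ≤ v a) :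
    ∃ w ∈ stdSimplex ℝ α, ∀ v ∈ A, 0 ≤ ∑ a, w a * v a := by
  classical
  have hint : interior (Set.Iic (0 : α → ℝ)) = Set.univ.pi fun _ ↦ Set.Iio 0 := by
    rw [← Set.pi_univ_Iic, interior_pi_set Set.finite_univ]
    simp
  have hdisj : Disjoint (interior (Set.Iic (0 : α → ℝ))) A :=
    hint ▸ Set.disjoint_left.2 fun v hv hvA ↦
      let ⟨a, ha⟩ := hnonneg v hvA
      (hv a trivial).not_ge ha
  have hintne : (interior (Set.Iic (0 : α → ℝ))).Nonempty := ⟨fun _ ↦ -1, by simp [hint]⟩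
  obtain ⟨f, u, hf0, hfu, huf⟩ :=
    geometric_hahn_banach_of_nonempty_interior (convex_Iic 0) hA hdisj hintne hne
  have hu : 0 ≤ u := by simpa using hfu 0 (Set.mem_Iic.2 le_rfl)
  set w : α → ℝ := fun a ↦ f (Pi.single a 1)
  have hw : ∀ a, 0 ≤ w a := strongDual_apply_single_nonneg hfu
  have hfw (v : α → ℝ) : f v = ∑ a, w a * v a := by
    conv_lhs => rw [pi_eq_sum_univ' v]
    simp [w, mul_comm]
  have hsum : 0 < ∑ a, w a := by
    refine (Finset.sum_nonneg fun a _ ↦ hw a).lt_of_ne' fun h ↦ hf0 (ContinuousLinearMap.ext ?_)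
    have hw0 : ∀ a, w a = 0 := by simpa [Finset.sum_eq_zero_iff_of_nonneg fun a _ ↦ hw a] using h
    simp [hfw, hw0]
  refine ⟨(∑ a, w a)⁻¹ • w, ⟨fun a ↦ mul_nonneg (inv_nonneg.2 hsum.le) (hw a), ?_⟩, fun v hv ↦ ?_⟩
  · simp [← Finset.mul_sum, hsum.ne']
  · simp only [Pi.smul_apply, smul_eq_mul, mul_assoc, ← Finset.mul_sum, ← hfw]
    exact mul_nonneg (inv_nonneg.2 hsum.le) (hu.trans (huf v hv))

end Separation

section Contraction

variable {𝕜 E F : Type*} [RCLike 𝕜] [NormedAddCommGroup E] [InnerProductSpace 𝕜 E]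
  [NormedAddCommGroup F] [InnerProductSpace 𝕜 F] [FiniteDimensional 𝕜 F]

theorem nonempty_linearIsometry_of_finrank_le [FiniteDimensional 𝕜 E]
    (h : finrank 𝕜 E ≤ finrank 𝕜 F) : Nonempty (E →ₗᵢ[𝕜] F) := by
  let b := stdOrthonormalBasis 𝕜 E
  let c := stdOrthonormalBasis 𝕜 F
  let f : E →ₗ[𝕜] F := b.toBasis.constr 𝕜 (c ∘ Fin.castLE h)
  have hf : f ∘ b.toBasis = c ∘ Fin.castLE h := funext fun i ↦ b.toBasis.constr_basis 𝕜 _ i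
  exact ⟨f.isometryOfOrthonormal (v := b.toBasis) (by simp)
    (hf ▸ c.orthonormal.comp _ (Fin.castLE_injective h))⟩

theorem exists_contraction_inner_eq (V : Submodule 𝕜 E) [FiniteDimensional 𝕜 V]
    (h : finrank 𝕜 V ≤ finrank 𝕜 F) :
    ∃ T : E → F, (∀ x, ‖T x‖ ≤ ‖x‖) ∧ ∀ x ∈ V, ∀ y, ⟪T x, T y⟫_𝕜 = ⟪x, y⟫_𝕜 := by
  obtain ⟨J⟩ := nonempty_linearIsometry_of_finrank_le h
  refine ⟨J ∘ V.orthogonalProjectionOnto, fun x ↦ ?_, fun x hx y ↦ ?_⟩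
  · simpa using V.norm_orthogonalProjectionOnto_apply_le x
  · lift x to V using hx
    simp

theorem exists_contraction_inner_family_eq {ι : Type*} [Fintype ι] (x : ι → E)
    (h : Fintype.card ι ≤ finrank 𝕜 F) :
    ∃ T : E → F, (∀ z, ‖T z‖ ≤ ‖z‖) ∧ ∀ i z, ⟪T (x i), T z⟫_𝕜 = ⟪x i, z⟫_𝕜 := by
  have : FiniteDimensional 𝕜 (Submodule.span 𝕜 (Set.range x)) :=
    .span_of_finite 𝕜 (Set.finite_range x)
  obtain ⟨T, hT, hinner⟩ :=
    exists_contraction_inner_eq (Submodule.span 𝕜 (Set.range x)) ((finrank_range_le_card x).trans h)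
  exact ⟨T, hT, fun i ↦ hinner (x i) (Submodule.subset_span ⟨i, rfl⟩)⟩

end Contraction

variable {𝕜 ι κ ν E F : Type*} [RCLike 𝕜] [Fintype ι] [Fintype κ] [Fintype ν]
  [NormedAddCommGroup E] [InnerProductSpace 𝕜 E] [NormedAddCommGroup F] [InnerProductSpace 𝕜 F]

/-- The sesquilinear pairing of a matrix `X` with the cross Gram matrix `(⟪x i, y j⟫)` of two
families of vectors. For the columns of `L` and `R` it is the trace pairing of `X` with `Lᴴ * R`,
see `trace_mul_eq_gramPairing`. -/
def gramPairing (X : Matrix ι κ 𝕜) (x : ι → E) (y : κ → E) : 𝕜 :=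
  ∑ i, ∑ j, X i j * ⟪y j, x i⟫_𝕜

theorem gramPairing_smul_smul (X : Matrix ι κ 𝕜) (a b : 𝕜) (x : ι → E) (y : κ → E) :
    gramPairing X (a • x) (b • y) = a * star b * gramPairing X x y := by
  simp only [gramPairing, Pi.smul_apply, inner_smul_left, inner_smul_right, Finset.mul_sum,
    starRingEnd_apply]
  exact Finset.sum_congr rfl fun i _ ↦ Finset.sum_congr rfl fun j _ ↦ by ring

theorem gramPairing_diagonal_mul_mul [DecidableEq ι] [DecidableEq κ] (C : Matrix ι κ 𝕜)
    (η : ι → 𝕜) (ξ : κ → 𝕜) (x : ι → E) (y : κ → E) :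
    gramPairing ((diagonal η)ᴴ * C * diagonal ξ) x y =
      gramPairing C (fun i ↦ star (η i) • x i) fun j ↦ star (ξ j) • y j := by
  simp only [gramPairing, diagonal_conjTranspose, mul_diagonal, diagonal_mul, Pi.star_apply,
    inner_smul_left, inner_smul_right, starRingEnd_apply, star_star]
  exact Finset.sum_congr rfl fun i _ ↦ Finset.sum_congr rfl fun j _ ↦ by ring

theorem gramPairing_eq_sum_coord (X : Matrix ι κ 𝕜) (x : ι → EuclideanSpace 𝕜 ν)
    (y : κ → EuclideanSpace 𝕜 ν) :
    gramPairing X x y = ∑ k, gramPairing X (fun i ↦ x i k) fun j ↦ y j k := by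
  simp only [gramPairing, PiLp.inner_apply, Finset.mul_sum]
  conv_rhs => rw [Finset.sum_comm]
  exact Finset.sum_congr rfl fun i _ ↦ Finset.sum_comm

theorem gramPairing_eq_inner [DecidableEq κ] (C : Matrix ι κ 𝕜) (u : ι → 𝕜) (v : κ → 𝕜) :
    gramPairing C u v =
      ⟪WithLp.toLp 2 (star u), C.toEuclideanLin (WithLp.toLp 2 (star v))⟫_𝕜 := by
  simp [gramPairing, PiLp.inner_apply, mulVec, dotProduct, Finset.sum_mul, mul_assoc,
    mul_comm (u _)]

theorem trace_mul_eq_gramPairing (L : Matrix ν ι 𝕜) (R : Matrix ν κ 𝕜) (X : Matrix ι κ 𝕜) :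
    ((Lᴴ * R)ᴴ * X).trace =
      gramPairing X (fun i ↦ WithLp.toLp 2 (L.col i)) fun j ↦ WithLp.toLp 2 (R.col j) := by
  rw [trace_mul_comm]
  simp [gramPairing, trace, mul_apply, PiLp.inner_apply, mul_comm]

theorem norm_gramPairing_le_opNorm_mul [DecidableEq κ] (C : Matrix ι κ 𝕜) (u : ι → 𝕜) (v : κ → 𝕜) :
    ‖gramPairing C u v‖ ≤ ‖C‖ * (√(∑ i, ‖u i‖ ^ 2) * √(∑ j, ‖v j‖ ^ 2)) := by
  calc ‖gramPairing C u v‖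
    _ ≤ ‖WithLp.toLp 2 (star u)‖ * ‖C.toEuclideanLin (WithLp.toLp 2 (star v))‖ := by
      rw [gramPairing_eq_inner]
      exact norm_inner_le_norm _ _
    _ ≤ ‖WithLp.toLp 2 (star u)‖ * (‖C‖ * ‖WithLp.toLp 2 (star v)‖) := by
      gcongr
      exact C.toEuclideanLin.toContinuousLinearMap.le_opNorm _
    _ = ‖C‖ * (√(∑ i, ‖u i‖ ^ 2) * √(∑ j, ‖v j‖ ^ 2)) := by
      simp only [EuclideanSpace.norm_eq, Pi.star_apply, norm_star]
      ring

theorem norm_gramPairing_euclidean_le_opNorm_mul [DecidableEq κ] (C : Matrix ι κ 𝕜)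
    (x : ι → EuclideanSpace 𝕜 ν) (y : κ → EuclideanSpace 𝕜 ν) :
    ‖gramPairing C x y‖ ≤ ‖C‖ * (√(∑ i, ‖x i‖ ^ 2) * √(∑ j, ‖y j‖ ^ 2)) := by
  simp only [EuclideanSpace.norm_sq_eq]
  rw [gramPairing_eq_sum_coord, Finset.sum_comm, Finset.sum_comm (s := .univ (α := κ))]
  calc ‖∑ k, gramPairing C (fun i ↦ x i k) fun j ↦ y j k‖
    _ ≤ ∑ k, ‖C‖ * (√(∑ i, ‖x i k‖ ^ 2) * √(∑ j, ‖y j k‖ ^ 2)) :=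
      norm_sum_le_of_le _ fun k _ ↦ norm_gramPairing_le_opNorm_mul C _ _
    _ ≤ ‖C‖ * (√(∑ k, ∑ i, ‖x i k‖ ^ 2) * √(∑ k, ∑ j, ‖y j k‖ ^ 2)) := by
      rw [← Finset.mul_sum]
      gcongr
      exact Real.sum_sqrt_mul_sqrt_le _ (fun _ ↦ by positivity) fun _ ↦ by positivity

theorem norm_gramPairing_diagonal_mul_mul_le [DecidableEq ι] [DecidableEq κ] (C : Matrix ι κ 𝕜)
    (η : ι → 𝕜) (ξ : κ → 𝕜) {x : ι → EuclideanSpace 𝕜 ν} {y : κ → EuclideanSpace 𝕜 ν}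
    (hx : ∀ i, ‖x i‖ ≤ 1) (hy : ∀ j, ‖y j‖ ≤ 1) :
    ‖gramPairing ((diagonal η)ᴴ * C * diagonal ξ) x y‖ ≤
      √(∑ i, ‖η i‖ ^ 2) * ‖C‖ * √(∑ j, ‖ξ j‖ ^ 2) := by
  rw [gramPairing_diagonal_mul_mul]
  refine (norm_gramPairing_euclidean_le_opNorm_mul C _ _).trans ?_
  simp only [norm_smul, norm_star]
  rw [mul_left_comm, ← mul_assoc]
  gcongr with i _ j _
  · exact mul_le_of_le_one_right (norm_nonneg _) (hx i)
  · exact mul_le_of_le_one_right (norm_nonneg _) (hy j)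

/-- `K` bounds the pairing of `X` with the Gram matrices of all families in the unit ball of `E`;
for `E` Euclidean these are the matrices `Lᴴ * R` with `L` and `R` of column norm at most one. -/
def IsGramBound (E : Type*) [NormedAddCommGroup E] [InnerProductSpace 𝕜 E] (X : Matrix ι κ 𝕜)
    (K : ℝ) : Prop :=
  ∀ ⦃x : ι → E⦄ ⦃y : κ → E⦄, (∀ i, ‖x i‖ ≤ 1) → (∀ j, ‖y j‖ ≤ 1) → ‖gramPairing X x y‖ ≤ K

theorem exists_isGramBound_norm_gramPairing (E : Type*) [NormedAddCommGroup E]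
    [InnerProductSpace 𝕜 E] [FiniteDimensional 𝕜 E] (X : Matrix ι κ 𝕜) :
    ∃ (x : ι → E) (y : κ → E), (∀ i, ‖x i‖ ≤ 1) ∧ (∀ j, ‖y j‖ ≤ 1) ∧
      IsGramBound E X ‖gramPairing X x y‖ := by
  have := FiniteDimensional.proper_rclike 𝕜 E
  let B : Set ((ι → E) × (κ → E)) := Metric.closedBall 0 1
  have hB : IsCompact B := isCompact_closedBall 0 1
  have hcont : Continuous fun p : (ι → E) × (κ → E) ↦ ‖gramPairing X p.1 p.2‖ := by
    unfold gramPairing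
    fun_prop
  obtain ⟨p, hp, hmax⟩ := hB.exists_isMaxOn ⟨0, by simp [B]⟩ hcont.continuousOn
  have hmem : ∀ q, q ∈ B ↔ (∀ i, ‖q.1 i‖ ≤ 1) ∧ ∀ j, ‖q.2 j‖ ≤ 1 := fun q ↦ by
    simp [B, Prod.norm_def, pi_norm_le_iff_of_nonneg]
  exact ⟨p.1, p.2, ((hmem p).1 hp).1, ((hmem p).1 hp).2,
    fun x y hx hy ↦ hmax ((hmem (x, y)).2 ⟨hx, hy⟩)⟩

namespace IsGramBound

variable {X : Matrix ι κ 𝕜} {K : ℝ}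

theorem nonneg (hK : IsGramBound E X K) : 0 ≤ K :=
  (norm_nonneg _).trans (hK (x := 0) (y := 0) (by simp) (by simp))

theorem norm_gramPairing_le_mul (hK : IsGramBound E X K) {s r : ℝ} {x : ι → E} {y : κ → E}
    (hs : 0 ≤ s) (hr : 0 ≤ r) (hx : ∀ i, ‖x i‖ ≤ s) (hy : ∀ j, ‖y j‖ ≤ r) :
    ‖gramPairing X x y‖ ≤ K * (s * r) := by
  have hball : ∀ {t : ℝ} {z : E}, 0 ≤ t → ‖z‖ ≤ t → ∃ z' : E, ‖z'‖ ≤ 1 ∧ z = (t : 𝕜) • z' := by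
    intro t z ht hz
    refine ⟨(t : 𝕜)⁻¹ • z, ?_, ?_⟩
    · rw [norm_smul, norm_inv, norm_ofReal, abs_of_nonneg ht]
      exact inv_mul_le_one_of_le₀ hz ht
    · rcases ht.eq_or_lt with rfl | ht
      · simpa using hz
      · rw [smul_inv_smul₀ (ofReal_ne_zero.2 ht.ne')]
  choose x' hx' hxx' using fun i ↦ hball hs (hx i)
  choose y' hy' hyy' using fun j ↦ hball hr (hy j)
  rw [show x = (s : 𝕜) • x' from funext hxx', show y = (r : 𝕜) • y' from funext hyy',
    gramPairing_smul_smul]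
  rw [norm_mul, norm_mul, norm_star, norm_ofReal, norm_ofReal, abs_of_nonneg hs, abs_of_nonneg hr,
    mul_comm K]
  gcongr
  exact hK hx' hy'

theorem of_finrank [FiniteDimensional 𝕜 F]
    (hF : min (Fintype.card ι) (Fintype.card κ) ≤ finrank 𝕜 F) (hK : IsGramBound F X K) :
    IsGramBound E X K := by
  intro x y hx hy
  obtain ⟨T, hT, hxy⟩ : ∃ T : E → F, (∀ z, ‖T z‖ ≤ ‖z‖) ∧
      ∀ i j, ⟪T (y j), T (x i)⟫_𝕜 = ⟪y j, x i⟫_𝕜 := by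
    rcases min_le_iff.1 hF with hι | hκ
    · obtain ⟨T, hT, hinner⟩ := exists_contraction_inner_family_eq x hι
      exact ⟨T, hT, fun i j ↦ by rw [← inner_conj_symm, hinner, inner_conj_symm]⟩
    · obtain ⟨T, hT, hinner⟩ := exists_contraction_inner_family_eq y hκ
      exact ⟨T, hT, fun i j ↦ hinner j (x i)⟩
  have := hK (x := T ∘ x) (y := T ∘ y) (fun i ↦ (hT _).trans (hx i)) fun j ↦ (hT _).trans (hy j)
  simpa [gramPairing, hxy] using this

end IsGramBound

/-- The deficits, indexed by `ι × κ`, in the arithmetic-geometric mean relaxation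
`re (gramPairing X x y) ≤ K / 2 * (‖x i‖ ^ 2 + ‖y j‖ ^ 2)` of a bound on the pairing. It is
additive over the coordinates of `x` and `y`, so a convex combination of slacks of scalar
families is the slack of a pair of families of vectors. -/
noncomputable def pairingSlack (X : Matrix ι κ 𝕜) (K : ℝ) (x : ι → E) (y : κ → E) : ι × κ → ℝ :=
  fun a ↦ K / 2 * (‖x a.1‖ ^ 2 + ‖y a.2‖ ^ 2) - re (gramPairing X x y)

theorem sum_smul_pairingSlack (X : Matrix ι κ 𝕜) (K : ℝ) {t : ν → ℝ} (ht : ∀ k, 0 ≤ t k)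
    (u : ν → ι → 𝕜) (v : ν → κ → 𝕜) :
    ∑ k, t k • pairingSlack X K (u k) (v k) =
      pairingSlack X K (fun i ↦ WithLp.toLp 2 fun k ↦ (√(t k) : 𝕜) * u k i)
        fun j ↦ WithLp.toLp 2 fun k ↦ (√(t k) : 𝕜) * v k j := by
  have hgram : ∀ k, gramPairing X (fun i ↦ (√(t k) : 𝕜) * u k i) (fun j ↦ (√(t k) : 𝕜) * v k j) =
      (t k : 𝕜) * gramPairing X (u k) (v k) := fun k ↦ by
    have := gramPairing_smul_smul X (√(t k) : 𝕜) (√(t k) : 𝕜) (u k) (v k)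
    rwa [star_def, conj_ofReal, ← ofReal_mul, Real.mul_self_sqrt (ht k)] at this
  ext a
  simp only [Finset.sum_apply, Pi.smul_apply, smul_eq_mul, pairingSlack, gramPairing_eq_sum_coord,
    hgram, EuclideanSpace.norm_sq_eq, norm_mul, norm_ofReal, mul_pow, sq_abs, Real.sq_sqrt (ht _),
    map_sum, re_ofReal_mul]
  rw [← Finset.sum_add_distrib, Finset.mul_sum, ← Finset.sum_sub_distrib]
  exact Finset.sum_congr rfl fun k _ ↦ by ring

namespace IsGramBound

variable {X : Matrix ι κ 𝕜} {K : ℝ}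

theorem exists_pairingSlack_nonneg [Nonempty ι] [Nonempty κ] (hK : IsGramBound E X K) (x : ι → E)
    (y : κ → E) : ∃ a, 0 ≤ pairingSlack X K x y a := by
  obtain ⟨i, hi⟩ := Finite.exists_max fun i ↦ ‖x i‖
  obtain ⟨j, hj⟩ := Finite.exists_max fun j ↦ ‖y j‖
  refine ⟨(i, j), sub_nonneg.2 ?_⟩
  calc re (gramPairing X x y)
    _ ≤ ‖gramPairing X x y‖ := re_le_norm _
    _ ≤ K * (‖x i‖ * ‖y j‖) := hK.norm_gramPairing_le_mul (norm_nonneg _) (norm_nonneg _) hi hj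
    _ ≤ K / 2 * (‖x i‖ ^ 2 + ‖y j‖ ^ 2) := by
      nlinarith [mul_nonneg hK.nonneg (sq_nonneg (‖x i‖ - ‖y j‖))]

variable [FiniteDimensional 𝕜 F]

theorem exists_pairingSlack_nonneg_of_mem_convexHull [Nonempty ι] [Nonempty κ]
    (hF : min (Fintype.card ι) (Fintype.card κ) ≤ finrank 𝕜 F) (hK : IsGramBound F X K)
    {d : ι × κ → ℝ}
    (hd : d ∈ convexHull ℝ
      (Set.range fun p : (ι → 𝕜) × (κ → 𝕜) ↦ pairingSlack X K p.1 p.2)) :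
    ∃ a, 0 ≤ d a := by
  obtain ⟨τ, _, t, d', ht, -, hd', rfl⟩ := mem_convexHull_iff_exists_fintype.1 hd
  choose p hp using hd'
  simp only [← hp, sum_smul_pairingSlack X K ht]
  exact (hK.of_finrank hF).exists_pairingSlack_nonneg _ _

theorem exists_weights_re_gramPairing_le [Nonempty ι] [Nonempty κ]
    (hF : min (Fintype.card ι) (Fintype.card κ) ≤ finrank 𝕜 F) (hK : IsGramBound F X K) :
    ∃ p ∈ stdSimplex ℝ ι, ∃ q ∈ stdSimplex ℝ κ, ∀ (u : ι → 𝕜) (v : κ → 𝕜),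
      re (gramPairing X u v) ≤ K / 2 * (∑ i, p i * ‖u i‖ ^ 2 + ∑ j, q j * ‖v j‖ ^ 2) := by
  obtain ⟨w, ⟨hw, hw1⟩, hslack⟩ := exists_mem_stdSimplex_forall_sum_nonneg
    (convex_convexHull ℝ (Set.range fun p : (ι → 𝕜) × (κ → 𝕜) ↦ pairingSlack X K p.1 p.2))
    (Set.range_nonempty _).convexHull
    fun d ↦ hK.exists_pairingSlack_nonneg_of_mem_convexHull hF
  refine ⟨fun i ↦ ∑ j, w (i, j), ⟨fun i ↦ Finset.sum_nonneg fun j _ ↦ hw _, ?_⟩,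
    fun j ↦ ∑ i, w (i, j), ⟨fun j ↦ Finset.sum_nonneg fun i _ ↦ hw _, ?_⟩, fun u v ↦ ?_⟩
  · rw [← hw1, Fintype.sum_prod_type]
  · rw [← hw1, Fintype.sum_prod_type_right]
  · have hp : ∑ i, (∑ j, w (i, j)) * ‖u i‖ ^ 2 = ∑ a, w a * ‖u a.1‖ ^ 2 := by
      simp only [Finset.sum_mul, Fintype.sum_prod_type]
    have hq : ∑ j, (∑ i, w (i, j)) * ‖v j‖ ^ 2 = ∑ a, w a * ‖v a.2‖ ^ 2 := by
      simp only [Finset.sum_mul, Fintype.sum_prod_type_right]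
    rw [hp, hq, ← sub_nonneg]
    calc (0 : ℝ)
      _ ≤ ∑ a, w a * pairingSlack X K u v a := hslack _ (subset_convexHull ℝ _ ⟨(u, v), rfl⟩)
      _ = K / 2 * (∑ a, w a * ‖u a.1‖ ^ 2 + ∑ a, w a * ‖v a.2‖ ^ 2) -
          (∑ a, w a) * re (gramPairing X u v) := by
        rw [← Finset.sum_add_distrib, Finset.mul_sum, Finset.sum_mul, ← Finset.sum_sub_distrib]
        exact Finset.sum_congr rfl fun a _ ↦ by rw [pairingSlack]; ring
      _ = _ := by rw [hw1, one_mul]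

theorem exists_weights_norm_gramPairing_le [Nonempty ι] [Nonempty κ]
    (hF : min (Fintype.card ι) (Fintype.card κ) ≤ finrank 𝕜 F) (hK : IsGramBound F X K) :
    ∃ p ∈ stdSimplex ℝ ι, ∃ q ∈ stdSimplex ℝ κ, ∀ (u : ι → 𝕜) (v : κ → 𝕜),
      ‖gramPairing X u v‖ ≤ K * (√(∑ i, p i * ‖u i‖ ^ 2) * √(∑ j, q j * ‖v j‖ ^ 2)) := by
  obtain ⟨p, hp, q, hq, hre⟩ := hK.exists_weights_re_gramPairing_le hF
  refine ⟨p, hp, q, hq, fun u v ↦ ?_⟩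
  obtain ⟨c, hc, hcz⟩ := exists_norm_eq_mul_self (gramPairing X u v)
  refine le_mul_sqrt_mul_sqrt_of_forall_mul_le hK.nonneg
    (Finset.sum_nonneg fun i _ ↦ mul_nonneg (hp.1 i) (sq_nonneg _))
    (Finset.sum_nonneg fun j _ ↦ mul_nonneg (hq.1 j) (sq_nonneg _)) fun t ↦ ?_
  have hgram : gramPairing X (((t : 𝕜) * c) • u) v = (t * ‖gramPairing X u v‖ : ℝ) := by
    have := gramPairing_smul_smul X ((t : 𝕜) * c) 1 u v
    rw [one_smul, star_one, mul_one, mul_assoc, ← hcz] at this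
    exact_mod_cast this
  have hnorm : ∑ i, p i * ‖(((t : 𝕜) * c) • u) i‖ ^ 2 = t ^ 2 * ∑ i, p i * ‖u i‖ ^ 2 := by
    simp only [Pi.smul_apply, norm_smul, norm_mul, norm_ofReal, hc, mul_one, mul_pow, sq_abs,
      Finset.mul_sum, mul_left_comm]
  simpa only [hgram, ofReal_re, hnorm] using hre (((t : 𝕜) * c) • u) v

end IsGramBound

theorem norm_le_of_norm_gramPairing_le [DecidableEq κ] {C : Matrix ι κ 𝕜} {K : ℝ} (hK : 0 ≤ K)
    (hC : ∀ (u : ι → 𝕜) (v : κ → 𝕜),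
      ‖gramPairing C u v‖ ≤ K * (√(∑ i, ‖u i‖ ^ 2) * √(∑ j, ‖v j‖ ^ 2))) : ‖C‖ ≤ K := by
  refine ContinuousLinearMap.opNorm_le_of_re_inner_le (𝕜 := 𝕜) hK fun v u hv hu ↦ ?_
  have hinner : ⟪u, C.toEuclideanLin v⟫_𝕜 = gramPairing C (star u.ofLp) (star v.ofLp) := by
    simp [gramPairing_eq_inner]
  calc re ⟪C.toEuclideanLin v, u⟫_𝕜
    _ ≤ ‖gramPairing C (star u.ofLp) (star v.ofLp)‖ := by
      rw [← hinner, norm_inner_symm]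
      exact re_le_norm _
    _ ≤ K * (‖u‖ * ‖v‖) := by simpa [EuclideanSpace.norm_eq] using hC (star u.ofLp) (star v.ofLp)
    _ = K := by rw [hu, hv, mul_one, mul_one]

theorem exists_factorization_of_weighted_bound [DecidableEq ι] [DecidableEq κ]
    {X : Matrix ι κ 𝕜} {K : ℝ} (hK : 0 ≤ K) {p : ι → ℝ} {q : κ → ℝ} (hp : ∀ i, 0 ≤ p i)
    (hq : ∀ j, 0 ≤ q j)
    (hX : ∀ (u : ι → 𝕜) (v : κ → 𝕜),
      ‖gramPairing X u v‖ ≤ K * (√(∑ i, p i * ‖u i‖ ^ 2) * √(∑ j, q j * ‖v j‖ ^ 2))) :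
    ∃ C : Matrix ι κ 𝕜, ‖C‖ ≤ K ∧
      X = (diagonal fun i ↦ (√(p i) : 𝕜))ᴴ * C * diagonal fun j ↦ (√(q j) : 𝕜) := by
  have hentry (i : ι) (j : κ) : ‖X i j‖ ≤ K * (√(p i) * √(q j)) := by
    simpa [gramPairing, Pi.single_apply, apply_ite] using hX (Pi.single i 1) (Pi.single j 1)
  have hscaled {r : ℝ} (hr : 0 ≤ r) (z : 𝕜) : r * ‖star (√r : 𝕜)⁻¹ • z‖ ^ 2 ≤ ‖z‖ ^ 2 := by
    rw [norm_smul, norm_star, norm_inv, norm_ofReal, mul_pow, inv_pow, sq_abs, Real.sq_sqrt hr,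
      ← mul_assoc]
    exact mul_le_of_le_one_left (sq_nonneg _) mul_inv_le_one
  refine ⟨(diagonal fun i ↦ (√(p i) : 𝕜)⁻¹)ᴴ * X * diagonal fun j ↦ (√(q j) : 𝕜)⁻¹,
    norm_le_of_norm_gramPairing_le hK fun u v ↦ ?_, ?_⟩
  · rw [gramPairing_diagonal_mul_mul]
    exact (hX _ _).trans (by gcongr; exacts [hscaled (hp _) _, hscaled (hq _) _])
  · ext i j
    rw [diagonal_conjTranspose, mul_diagonal, diagonal_mul, diagonal_conjTranspose, mul_diagonal,
      diagonal_mul]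
    by_cases hij : √(p i) = 0 ∨ √(q j) = 0
    · have : X i j = 0 := by
        rcases hij with h | h <;> simpa [h] using hentry i j
      simp [this]
    · obtain ⟨hi, hj⟩ := not_or.1 hij
      have hi : (√(p i) : 𝕜) ≠ 0 := ofReal_ne_zero.2 hi
      have hj : (√(q j) : 𝕜) ≠ 0 := ofReal_ne_zero.2 hj
      simp only [Pi.star_apply, star_inv₀, star_def, conj_ofReal]
      field_simp

theorem IsGramBound.exists_factorization_le [DecidableEq ι] [DecidableEq κ] [FiniteDimensional 𝕜 F]
    {X : Matrix ι κ 𝕜} {K : ℝ} (hF : min (Fintype.card ι) (Fintype.card κ) ≤ finrank 𝕜 F)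
    (hK : IsGramBound F X K) :
    ∃ (η : ι → 𝕜) (C : Matrix ι κ 𝕜) (ξ : κ → 𝕜), X = (diagonal η)ᴴ * C * diagonal ξ ∧
      √(∑ i, ‖η i‖ ^ 2) * ‖C‖ * √(∑ j, ‖ξ j‖ ^ 2) ≤ K := by
  rcases isEmpty_or_nonempty ι with hι | hι
  · exact ⟨0, 0, 0, Subsingleton.elim _ _, by simpa using hK.nonneg⟩
  rcases isEmpty_or_nonempty κ with hκ | hκ
  · exact ⟨0, 0, 0, Subsingleton.elim _ _, by simpa using hK.nonneg⟩
  obtain ⟨p, ⟨hp, hp1⟩, q, ⟨hq, hq1⟩, hX⟩ := hK.exists_weights_norm_gramPairing_le hF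
  obtain ⟨C, hC, hfac⟩ := exists_factorization_of_weighted_bound hK.nonneg hp hq hX
  exact ⟨_, C, _, hfac, by simpa [Real.sq_sqrt, hp, hq, hp1, hq1] using hC⟩

/-- The column norm `colNorm`, for matrices over `ℝ` or `ℂ` with arbitrary finite index types. -/
noncomputable def columnNorm (L : Matrix ν ι 𝕜) : ℝ :=
  ⨆ j, √(∑ i, ‖L i j‖ ^ 2)

theorem columnNorm_le_one_iff {γ : Type*} [Finite γ] {L : Matrix ν γ 𝕜} :
    columnNorm L ≤ 1 ↔ ∀ j, ‖WithLp.toLp 2 (L.col j)‖ ≤ 1 := by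
  simp only [EuclideanSpace.norm_eq]
  exact ⟨fun h j ↦ (le_ciSup (Set.finite_range _).bddAbove j).trans h,
    fun h ↦ Real.iSup_le h zero_le_one⟩

theorem sup_trace_pairing_eq_inf_factorization_general [DecidableEq ι] [DecidableEq κ]
    (hν : min (Fintype.card ι) (Fintype.card κ) ≤ Fintype.card ν) (X : Matrix ι κ 𝕜) :
    ∃ K,
      IsGreatest (Set.range fun p : {p : Matrix ν ι 𝕜 × Matrix ν κ 𝕜 //
        columnNorm p.1 ≤ 1 ∧ columnNorm p.2 ≤ 1} ↦ ‖((p.1.1ᴴ * p.1.2)ᴴ * X).trace‖) K ∧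
      IsLeast (Set.range fun q : {q : (ι → 𝕜) × Matrix ι κ 𝕜 × (κ → 𝕜) //
        X = (diagonal q.1)ᴴ * q.2.1 * diagonal q.2.2} ↦
          √(∑ i, ‖q.1.1 i‖ ^ 2) * ‖q.1.2.1‖ * √(∑ j, ‖q.1.2.2 j‖ ^ 2)) K := by
  obtain ⟨x, y, hx, hy, hmax⟩ := exists_isGramBound_norm_gramPairing (EuclideanSpace 𝕜 ν) X
  obtain ⟨η, C, ξ, hfac, hle⟩ := hmax.exists_factorization_le (by simpa using hν)
  refine ⟨‖gramPairing X x y‖,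
    ⟨⟨⟨(of fun k i ↦ x i k, of fun k j ↦ y j k), columnNorm_le_one_iff.2 hx,
      columnNorm_le_one_iff.2 hy⟩, congrArg norm (trace_mul_eq_gramPairing _ _ X)⟩, ?_⟩,
    ⟨⟨(η, C, ξ), hfac⟩, hle.antisymm ?_⟩, ?_⟩
  · rintro _ ⟨⟨⟨L, R⟩, hL, hR⟩, rfl⟩
    simpa only [trace_mul_eq_gramPairing] using
      hmax (columnNorm_le_one_iff.1 hL) (columnNorm_le_one_iff.1 hR)
  · simpa only [← hfac] using norm_gramPairing_diagonal_mul_mul_le C η ξ hx hy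
  · rintro _ ⟨⟨⟨η, C, ξ⟩, hfac⟩, rfl⟩
    simpa only [← hfac] using norm_gramPairing_diagonal_mul_mul_le C η ξ hx hy

end DiagonalFactorization

/-- The supremum of `|Tr((Lᴴ R)ᴴ X)|` over `‖L‖_c ≤ 1`, `‖R‖_c ≤ 1` with inner
dimension `min m n` equals the infimum of `‖η‖₂‖C‖_∞‖ξ‖₂` over factorizations
`X = Δ_m(η)ᴴ C Δ_n(ξ)`; both the supremum and the infimum are attained. -/
theorem sup_trace_pairing_eq_inf_factorization
    (m n : ℕ) (X : Matrix (Fin m) (Fin n) ℂ) :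
    (⨆ p : {p : Matrix (Fin (min m n)) (Fin m) ℂ × Matrix (Fin (min m n)) (Fin n) ℂ //
        colNorm p.1 ≤ 1 ∧ colNorm p.2 ≤ 1},
      ‖((p.1.1ᴴ * p.1.2)ᴴ * X).trace‖) =
    (⨅ q : {q : (Fin m → ℂ) × Matrix (Fin m) (Fin n) ℂ × (Fin n → ℂ) //
        X = (Matrix.diagonal q.1)ᴴ * q.2.1 * Matrix.diagonal q.2.2},
      eNorm q.1.1 * opNorm q.1.2.1 * eNorm q.1.2.2) ∧
    (∃ p : {p : Matrix (Fin (min m n)) (Fin m) ℂ × Matrix (Fin (min m n)) (Fin n) ℂ //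
        colNorm p.1 ≤ 1 ∧ colNorm p.2 ≤ 1},
      ‖((p.1.1ᴴ * p.1.2)ᴴ * X).trace‖ =
        ⨆ p' : {p' : Matrix (Fin (min m n)) (Fin m) ℂ × Matrix (Fin (min m n)) (Fin n) ℂ //
            colNorm p'.1 ≤ 1 ∧ colNorm p'.2 ≤ 1},
          ‖((p'.1.1ᴴ * p'.1.2)ᴴ * X).trace‖) ∧
    (∃ q : {q : (Fin m → ℂ) × Matrix (Fin m) (Fin n) ℂ × (Fin n → ℂ) //
        X = (Matrix.diagonal q.1)ᴴ * q.2.1 * Matrix.diagonal q.2.2},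
      eNorm q.1.1 * opNorm q.1.2.1 * eNorm q.1.2.2 =
        ⨅ q' : {q' : (Fin m → ℂ) × Matrix (Fin m) (Fin n) ℂ × (Fin n → ℂ) //
            X = (Matrix.diagonal q'.1)ᴴ * q'.2.1 * Matrix.diagonal q'.2.2},
          eNorm q'.1.1 * opNorm q'.1.2.1 * eNorm q'.1.2.2) := by
  obtain ⟨K, hmax, hmin⟩ :=
    sup_trace_pairing_eq_inf_factorization_general (ν := Fin (min m n)) (by simp) X
  exact iSup_eq_iInf_and_exists_eq hmax hmin
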